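/- arXiv:1401.2375 — 2 statements merged into one kernel-verified Lean document; each statement's English description precedes it below -/
import Mathlib

section
/- Let c_0, c_1, c_2, c_3 and u, ν, μ be real analytic on an open interval I with u, μ nowhere vanishing, and let γ_0, γ_1, γ_2, γ_3 be the transformed coefficients given by γ_0 = (c_0 + 3c_1ν + 3c_2ν² + c_3ν³ − ν')/(μu), γ_1 = (c_1 + 2c_2ν + c_3ν²)/μ − u'/(3μu), γ_2 = u(c_2 + c_3ν)/μ, γ_3 = u²c_3/μ, with D := μ⁻¹ d/dx. Define the hierarchies s_3 = c_0c_3² − 3c_1c_2c_3 + 2c_2³ + c_3c_2' − c_2c_3', s_{2n+1} = c_3·s_{2n−1}' − (2n−1)·s_{2n−1}·(c_3' + 3(c_1c_3 − c_2²)), and analogously (s_3)_1 = γ_0γ_3² − 3γ_1γ_2γ_3 + 2γ_2³ + γ_3·Dγ_2 − γ_2·Dγ_3, (s_{2n+1})_1 = γ_3·D(s_{2n−1})_1 − (2n−1)·(s_{2n−1})_1·(Dγ_3 + 3(γ_1γ_3 − γ_2²)). Then for every n ≥ 1, (s_{2n+1})_1 = (u/μ)^{2n+1} · s_{2n+1}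 on I. -/
open Set

/-- The transformed coefficient `γ₀` under `y = uη + ν`, `dξ/dx = μ`. -/
noncomputable def gam0 (c0 c1 c2 c3 u v m : ℝ → ℝ) : ℝ → ℝ := fun x =>
  (c0 x + 3 * c1 x * v x + 3 * c2 x * (v x) ^ 2 + c3 x * (v x) ^ 3 - deriv v x) / (m x * u x)

/-- The transformed coefficient `γ₁`. -/
noncomputable def gam1 (c1 c2 c3 u v m : ℝ → ℝ) : ℝ → ℝ := fun x =>
  (c1 x + 2 * c2 x * v x + c3 x * (v x) ^ 2) / m x - deriv u x / (3 * m x * u x)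

/-- The transformed coefficient `γ₂`. -/
noncomputable def gam2 (c2 c3 u v m : ℝ → ℝ) : ℝ → ℝ := fun x =>
  u x * (c2 x + c3 x * v x) / m x

/-- The transformed coefficient `γ₃`. -/
noncomputable def gam3 (c3 u m : ℝ → ℝ) : ℝ → ℝ := fun x =>
  (u x) ^ 2 * c3 x / m x

/-- The relative invariant `s₃`. -/
noncomputable def s3 (c0 c1 c2 c3 : ℝ → ℝ) : ℝ → ℝ := fun x =>
  c0 x * (c3 x) ^ 2 - 3 * c1 x * c2 x * c3 x + 2 * (c2 x) ^ 3
    + c3 x * deriv c2 x - c2 x * deriv c3 x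

/-- The Liouville hierarchy: `sH k = s_{2k+3}` (`sH 0 = s₃`). -/
noncomputable def sH (c0 c1 c2 c3 : ℝ → ℝ) : ℕ → ℝ → ℝ
  | 0 => s3 c0 c1 c2 c3
  | k + 1 => fun x =>
      c3 x * deriv (sH c0 c1 c2 c3 k) x
        - (2 * (k : ℝ) + 3) * sH c0 c1 c2 c3 k x
          * (deriv c3 x + 3 * (c1 x * c3 x - (c2 x) ^ 2))

/-- `s₃` built from coefficients `g0,…,g3` and the derivation `D = μ⁻¹ d/dx`. -/
noncomputable def s3D (g0 g1 g2 g3 m : ℝ → ℝ) : ℝ → ℝ := fun x =>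
  g0 x * (g3 x) ^ 2 - 3 * g1 x * g2 x * g3 x + 2 * (g2 x) ^ 3
    + g3 x * ((m x)⁻¹ * deriv g2 x) - g2 x * ((m x)⁻¹ * deriv g3 x)

/-- The hierarchy built from `g0,…,g3` and the derivation `D = μ⁻¹ d/dx`:
`sHD k = (s_{2k+3})₁`. -/
noncomputable def sHD (g0 g1 g2 g3 m : ℝ → ℝ) : ℕ → ℝ → ℝ
  | 0 => s3D g0 g1 g2 g3 m
  | k + 1 => fun x =>
      g3 x * ((m x)⁻¹ * deriv (sHD g0 g1 g2 g3 m k) x)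
        - (2 * (k : ℝ) + 3) * sHD g0 g1 g2 g3 m k x
          * ((m x)⁻¹ * deriv g3 x + 3 * (g1 x * g3 x - (g2 x) ^ 2))

/-!
Write `λ = u / μ` and `D = μ⁻¹ d/dx`.

For `s₃`, the polynomial part is the constant coefficient of the depressed cubic, so it is blind to
the shift by `ν` except through `ν'` in `γ₀` and `u'` in `γ₁`; the two resulting correction terms
are cancelled by those of the Wronskian `γ₃ Dγ₂ - γ₂ Dγ₃`.

For the recursion, `κ = c₃' + 3(c₁c₃ - c₂²)` behaves like a connection form: its transform is
`λ² (κ + c₃ λ'/λ)`. If `f` is multiplied by `λʷ`, then `c₃ f'` acquires the factor `λʷ⁺²` and the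
extra term `w c₃ (λ'/λ) f`, which is exactly what `w f κ` absorbs. Hence `f ↦ c₃ f' - w f κ` sends
relative invariants of weight `w` to relative invariants of weight `w + 2`.
-/

open Filter Topology ContDiff

section LogDeriv

variable {𝕜 : Type*} [NontriviallyNormedField 𝕜] {f g h : 𝕜 → 𝕜} {x : 𝕜}

lemma deriv_fun_mul_eq_mul_deriv_add_logDeriv_mul (hh : DifferentiableAt 𝕜 h x) (hx : h x ≠ 0)
    (hf : DifferentiableAt 𝕜 f x) :
    deriv (fun y ↦ h y * f y) x = h x * (deriv f x + logDeriv h x * f x) := by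
  rw [deriv_fun_mul hh hf, logDeriv_apply]
  field_simp
  ring

lemma deriv_fun_pow_mul_eq_pow_mul_deriv_add_logDeriv_mul (hh : DifferentiableAt 𝕜 h x)
    (hx : h x ≠ 0) (hf : DifferentiableAt 𝕜 f x) (n : ℕ) :
    deriv (fun y ↦ h y ^ n * f y) x = h x ^ n * (deriv f x + n * logDeriv h x * f x) := by
  rw [deriv_fun_mul_eq_mul_deriv_add_logDeriv_mul (hh.fun_pow n) (pow_ne_zero n hx) hf,
    logDeriv_fun_pow hh]

lemma wronskian_fun_mul_left (hh : DifferentiableAt 𝕜 h x) (hf : DifferentiableAt 𝕜 f x)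
    (hg : DifferentiableAt 𝕜 g x) :
    h x * f x * deriv (fun y ↦ h y * g y) x - h x * g x * deriv (fun y ↦ h y * f y) x =
      h x ^ 2 * (f x * deriv g x - g x * deriv f x) := by
  rw [deriv_fun_mul hh hf, deriv_fun_mul hh hg]
  ring

end LogDeriv

section TransformedCoefficients

variable {c0 c1 c2 c3 u v m : ℝ → ℝ} {x : ℝ}

lemma gam2_eq_div_mul : gam2 c2 c3 u v m = fun y ↦ u y / m y * (c2 y + c3 y * v y) := by
  funext y
  simp only [gam2]
  ring

lemma gam3_eq_div_mul : gam3 c3 u m = fun y ↦ u y / m y * (u y * c3 y) := by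
  funext y
  simp only [gam3]
  ring

lemma inv_mul_deriv_gam3 (hc3 : DifferentiableAt ℝ c3 x) (hu : DifferentiableAt ℝ u x)
    (hm : DifferentiableAt ℝ m x) (hux : u x ≠ 0) (hmx : m x ≠ 0) :
    (m x)⁻¹ * deriv (gam3 c3 u m) x =
      (u x / m x) ^ 2 *
        (deriv c3 x + c3 x * (logDeriv u x + logDeriv (fun y ↦ u y / m y) x)) := by
  rw [gam3_eq_div_mul,
    deriv_fun_mul_eq_mul_deriv_add_logDeriv_mul (hu.fun_div hm hmx) (div_ne_zero hux hmx)
      (hu.fun_mul hc3),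
    deriv_fun_mul_eq_mul_deriv_add_logDeriv_mul hu hux hc3]
  ring

lemma gam1_mul_gam3_sub_gam2_sq :
    gam1 c1 c2 c3 u v m x * gam3 c3 u m x - gam2 c2 c3 u v m x ^ 2 =
      (u x / m x) ^ 2 * (c1 x * c3 x - c2 x ^ 2 - c3 x * logDeriv u x / 3) := by
  simp only [gam1, gam2, gam3, logDeriv_apply]
  ring

lemma connection_gam (hc3 : DifferentiableAt ℝ c3 x) (hu : DifferentiableAt ℝ u x)
    (hm : DifferentiableAt ℝ m x) (hux : u x ≠ 0) (hmx : m x ≠ 0) :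
    (m x)⁻¹ * deriv (gam3 c3 u m) x +
        3 * (gam1 c1 c2 c3 u v m x * gam3 c3 u m x - gam2 c2 c3 u v m x ^ 2) =
      (u x / m x) ^ 2 * (deriv c3 x + 3 * (c1 x * c3 x - c2 x ^ 2) +
        c3 x * logDeriv (fun y ↦ u y / m y) x) := by
  rw [inv_mul_deriv_gam3 hc3 hu hm hux hmx, gam1_mul_gam3_sub_gam2_sq]
  ring

lemma depressed_cubic_gam :
    gam0 c0 c1 c2 c3 u v m x * gam3 c3 u m x ^ 2 -
        3 * gam1 c1 c2 c3 u v m x * gam2 c2 c3 u v m x * gam3 c3 u m x +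
        2 * gam2 c2 c3 u v m x ^ 3 =
      (u x / m x) ^ 3 * (c0 x * c3 x ^ 2 - 3 * c1 x * c2 x * c3 x + 2 * c2 x ^ 3 -
        c3 x ^ 2 * deriv v x + c3 x * (c2 x + c3 x * v x) * logDeriv u x) := by
  simp only [gam0, gam1, gam2, gam3, logDeriv_apply]
  field_simp
  ring

lemma wronskian_gam (hc2 : DifferentiableAt ℝ c2 x) (hc3 : DifferentiableAt ℝ c3 x)
    (hu : DifferentiableAt ℝ u x) (hv : DifferentiableAt ℝ v x) (hm : DifferentiableAt ℝ m x)
    (hux : u x ≠ 0) (hmx : m x ≠ 0) :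
    gam3 c3 u m x * ((m x)⁻¹ * deriv (gam2 c2 c3 u v m) x) -
        gam2 c2 c3 u v m x * ((m x)⁻¹ * deriv (gam3 c3 u m) x) =
      (u x / m x) ^ 3 * (c3 x * deriv c2 x - c2 x * deriv c3 x +
        c3 x ^ 2 * deriv v x - c3 x * (c2 x + c3 x * v x) * logDeriv u x) := by
  have scale := wronskian_fun_mul_left (hu.fun_div hm hmx) (hu.fun_mul hc3)
    (hc2.fun_add (hc3.fun_mul hv))
  have deriv_shift : deriv (fun y ↦ c2 y + c3 y * v y) x =
      deriv c2 x + (deriv c3 x * v x + c3 x * deriv v x) := by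
    rw [deriv_fun_add hc2 (hc3.fun_mul hv), deriv_fun_mul hc3 hv]
  rw [deriv_shift, deriv_fun_mul_eq_mul_deriv_add_logDeriv_mul hu hux hc3] at scale
  rw [gam2_eq_div_mul, gam3_eq_div_mul]
  linear_combination (m x)⁻¹ * scale

lemma s3D_gam (hc2 : DifferentiableAt ℝ c2 x) (hc3 : DifferentiableAt ℝ c3 x)
    (hu : DifferentiableAt ℝ u x) (hv : DifferentiableAt ℝ v x) (hm : DifferentiableAt ℝ m x)
    (hux : u x ≠ 0) (hmx : m x ≠ 0) :
    s3D (gam0 c0 c1 c2 c3 u v m) (gam1 c1 c2 c3 u v m) (gam2 c2 c3 u v m) (gam3 c3 u m) m x =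
      (u x / m x) ^ 3 * s3 c0 c1 c2 c3 x := by
  simp only [s3D, s3]
  rw [add_sub_assoc, depressed_cubic_gam, wronskian_gam hc2 hc3 hu hv hm hux hmx]
  ring

lemma weight_add_two_gam_of_eventuallyEq {f F : ℝ → ℝ} {w : ℕ}
    (hF : F =ᶠ[𝓝 x] fun y ↦ (u y / m y) ^ w * f y)
    (hf : DifferentiableAt ℝ f x) (hc3 : DifferentiableAt ℝ c3 x) (hu : DifferentiableAt ℝ u x)
    (hm : DifferentiableAt ℝ m x) (hux : u x ≠ 0) (hmx : m x ≠ 0) :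
    gam3 c3 u m x * ((m x)⁻¹ * deriv F x) - w * F x * ((m x)⁻¹ * deriv (gam3 c3 u m) x +
        3 * (gam1 c1 c2 c3 u v m x * gam3 c3 u m x - gam2 c2 c3 u v m x ^ 2)) =
      (u x / m x) ^ (w + 2) *
        (c3 x * deriv f x - w * f x * (deriv c3 x + 3 * (c1 x * c3 x - c2 x ^ 2))) := by
  rw [connection_gam hc3 hu hm hux hmx, hF.deriv_eq, hF.eq_of_nhds,
    deriv_fun_pow_mul_eq_pow_mul_deriv_add_logDeriv_mul (hu.fun_div hm hmx)
      (div_ne_zero hux hmx) hf, gam3]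
  ring

end TransformedCoefficients

section Smoothness

variable {S : Set ℝ} {c0 c1 c2 c3 : ℝ → ℝ}

lemma contDiffOn_s3 {n : ℕ∞ω} (hS : IsOpen S) (hc0 : ContDiffOn ℝ n c0 S)
    (hc1 : ContDiffOn ℝ n c1 S) (hc2 : ContDiffOn ℝ (n + 1) c2 S)
    (hc3 : ContDiffOn ℝ (n + 1) c3 S) :
    ContDiffOn ℝ n (s3 c0 c1 c2 c3) S := by
  have hc2' : ContDiffOn ℝ n (deriv c2) S := hc2.deriv_of_isOpen hS le_rfl
  have hc3' : ContDiffOn ℝ n (deriv c3) S := hc3.deriv_of_isOpen hS le_rfl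
  have hc2n : ContDiffOn ℝ n c2 S := hc2.of_le le_self_add
  have hc3n : ContDiffOn ℝ n c3 S := hc3.of_le le_self_add
  unfold s3
  fun_prop

lemma contDiffOn_sH (hS : IsOpen S) (k : ℕ) {n : ℕ∞ω} (hc0 : ContDiffOn ℝ (n + k) c0 S)
    (hc1 : ContDiffOn ℝ (n + k) c1 S) (hc2 : ContDiffOn ℝ (n + k + 1) c2 S)
    (hc3 : ContDiffOn ℝ (n + k + 1) c3 S) :
    ContDiffOn ℝ n (sH c0 c1 c2 c3 k) S := by
  induction k generalizing n with
  | zero =>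
    simp only [Nat.cast_zero, add_zero] at hc0 hc1 hc2 hc3
    exact contDiffOn_s3 hS hc0 hc1 hc2 hc3
  | succ k ih =>
    have hc1n : ContDiffOn ℝ n c1 S := hc1.of_le le_self_add
    have hc2n : ContDiffOn ℝ n c2 S := hc2.of_le (le_self_add.trans le_self_add)
    have hc3n : ContDiffOn ℝ n c3 S := hc3.of_le (le_self_add.trans le_self_add)
    have hc3' : ContDiffOn ℝ n (deriv c3) S :=
      hc3.deriv_of_isOpen hS (add_le_add_left le_self_add 1)
    have order_eq : n + (k + 1 : ℕ) = n + 1 + k := by push_cast; ring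
    rw [order_eq] at hc0 hc1 hc2 hc3
    have hs : ContDiffOn ℝ (n + 1) (sH c0 c1 c2 c3 k) S := ih hc0 hc1 hc2 hc3
    have hs' : ContDiffOn ℝ n (deriv (sH c0 c1 c2 c3 k)) S := hs.deriv_of_isOpen hS le_rfl
    have hsn : ContDiffOn ℝ n (sH c0 c1 c2 c3 k) S := hs.of_le le_self_add
    simp only [sH]
    fun_prop

end Smoothness

theorem hierarchy_relative_invariant_general {S : Set ℝ} (hS : IsOpen S)
    {c0 c1 c2 c3 u v m : ℝ → ℝ} (k : ℕ)
    (hc0 : ContDiffOn ℝ k c0 S) (hc1 : ContDiffOn ℝ k c1 S)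
    (hc2 : ContDiffOn ℝ (k + 1) c2 S) (hc3 : ContDiffOn ℝ (k + 1) c3 S)
    (hu : DifferentiableOn ℝ u S) (hv : DifferentiableOn ℝ v S) (hm : DifferentiableOn ℝ m S)
    (hu0 : ∀ x ∈ S, u x ≠ 0) (hm0 : ∀ x ∈ S, m x ≠ 0) :
    ∀ x ∈ S,
      sHD (gam0 c0 c1 c2 c3 u v m) (gam1 c1 c2 c3 u v m)
          (gam2 c2 c3 u v m) (gam3 c3 u m) m k x
        = (u x / m x) ^ (2 * k + 3) * sH c0 c1 c2 c3 k x := by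
  induction k with
  | zero =>
    intro x hx
    have hSx : S ∈ 𝓝 x := hS.mem_nhds hx
    exact s3D_gam ((hc2.differentiableOn (by simp)).differentiableAt hSx)
      ((hc3.differentiableOn (by simp)).differentiableAt hSx) (hu.differentiableAt hSx)
      (hv.differentiableAt hSx) (hm.differentiableAt hSx) (hu0 x hx) (hm0 x hx)
  | succ k ih =>
    intro x hx
    have hSx : S ∈ 𝓝 x := hS.mem_nhds hx
    have hs : ContDiffOn ℝ 1 (sH c0 c1 c2 c3 k) S := by
      rw [Nat.cast_add_one, add_comm (k : ℕ∞ω)] at hc0 hc1 hc2 hc3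
      exact contDiffOn_sH hS k hc0 hc1 hc2 hc3
    have le_succ : (k : ℕ∞ω) ≤ (k + 1 : ℕ) := by exact_mod_cast k.le_succ
    have ih := ih (hc0.of_le le_succ) (hc1.of_le le_succ) (hc2.of_le (add_le_add_left le_succ 1))
      (hc3.of_le (add_le_add_left le_succ 1))
    have step := weight_add_two_gam_of_eventuallyEq (c1 := c1) (c2 := c2) (c3 := c3) (v := v)
      (eventuallyEq_of_mem hSx ih)
      ((hs.differentiableOn one_ne_zero).differentiableAt hSx)
      ((hc3.differentiableOn (by simp)).differentiableAt hSx) (hu.differentiableAt hSx)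
      (hm.differentiableAt hSx) (hu0 x hx) (hm0 x hx)
    push_cast at step
    exact step

/-- the hierarchy `s_{2n+1}` (`n ≥ 1`, i.e. `s_{2k+3}` for `k ≥ 0`) consists of
relative invariants: `(s_{2n+1})₁ = (u/μ)^{2n+1} · s_{2n+1}`. -/
theorem hierarchy_relative_invariant
    (a b : ℝ) (c0 c1 c2 c3 u v m : ℝ → ℝ)
    (hc0 : AnalyticOnNhd ℝ c0 (Ioo a b)) (hc1 : AnalyticOnNhd ℝ c1 (Ioo a b))
    (hc2 : AnalyticOnNhd ℝ c2 (Ioo a b)) (hc3 : AnalyticOnNhd ℝ c3 (Ioo a b))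
    (hu : AnalyticOnNhd ℝ u (Ioo a b)) (hv : AnalyticOnNhd ℝ v (Ioo a b))
    (hm : AnalyticOnNhd ℝ m (Ioo a b))
    (hu0 : ∀ x ∈ Ioo a b, u x ≠ 0) (hm0 : ∀ x ∈ Ioo a b, m x ≠ 0) :
    ∀ k : ℕ, ∀ x ∈ Ioo a b,
      sHD (gam0 c0 c1 c2 c3 u v m) (gam1 c1 c2 c3 u v m)
          (gam2 c2 c3 u v m) (gam3 c3 u m) m k x
        = (u x / m x) ^ (2 * k + 3) * sH c0 c1 c2 c3 k x := by
  intro k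
  exact hierarchy_relative_invariant_general isOpen_Ioo k hc0.contDiffOn_of_completeSpace
    hc1.contDiffOn_of_completeSpace hc2.contDiffOn_of_completeSpace
    hc3.contDiffOn_of_completeSpace hu.differentiableOn hv.differentiableOn hm.differentiableOn
    hu0 hm0
end

section
/- Let c_0, c_1, c_2, c_3 be real analytic on an open interval I with c_3 nowhere vanishing, let u, ν, μ be real analytic with u, μ nowhere vanishing, and let γ_1, γ_2, γ_3 be the transformed coefficients of the Abel equation, with D := μ⁻¹ d/dx, r := (c_3' + 3(c_1c_3 − c_2²))/c_3, and R̃ := (Dγ_3 + 3(γ_1γ_3 − γ_2²))/γ_3. Then for every integer n ∈ ℤ and every differentiable function φ : I → ℝ, setting φ̃ := (u/μ)ⁿ·φ, one has Dφ̃ − n·R̃·φ̃ = (1/μ)·(u/μ)ⁿ·(φ' − n·r·φ) on I. In other words, ∇_n := d/dx − n·(c_3' + 3(c_1c_3 − c_2²))/c_3 is a covariant derivative sending tensors of degree n (quantities transforming with the factor (u/μ)ⁿ) to tensors of degree n+1. -/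
open Set

/-- The transformed connection `R̃ = (Dγ₃ + 3(γ₁γ₃ − γ₂²))/γ₃`, `D = μ⁻¹ d/dx`. -/
noncomputable def Rtil (c1 c2 c3 u v m : ℝ → ℝ) : ℝ → ℝ := fun x =>
  ((m x)⁻¹ * deriv (gam3 c3 u m) x
      + 3 * (gam1 c1 c2 c3 u v m x * gam3 c3 u m x - (gam2 c2 c3 u v m x) ^ 2))
    / gam3 c3 u m x

/-!
The two connections differ by a logarithmic derivative: with `q = u/μ`, `R̃ = μ⁻¹ (q′/q + r)`.
Indeed `r = c₃′/c₃ + 3 (c₁ - c₂²/c₃)`, and passing from `cᵢ` to `γᵢ` the first summand gains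
`2 u′/u - μ′/μ` while the second loses `u′/u`, all up to the overall factor `μ⁻¹`; the shift `ν`
cancels because `3 (c₁ - c₂²/c₃)` is the linear coefficient of the depressed cubic.
Since `(qⁿφ)′ = qⁿ (φ′ + n (q′/q) φ)`, the extra term of `R̃` is exactly what covariance requires.
-/

section LogDeriv

variable {𝕜 𝕜' : Type*} [NontriviallyNormedField 𝕜] [NontriviallyNormedField 𝕜']
  [NormedAlgebra 𝕜 𝕜'] {q φ : 𝕜 → 𝕜'} {x : 𝕜}

theorem deriv_zpow_mul (hq : DifferentiableAt 𝕜 q x) (hq0 : q x ≠ 0)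
    (hφ : DifferentiableAt 𝕜 φ x) (n : ℤ) :
    deriv (fun t => q t ^ n * φ t) x = q x ^ n * (deriv φ x + n * logDeriv q x * φ x) := by
  have hqn : DifferentiableAt 𝕜 (fun t => q t ^ n) x :=
    ((differentiableAt_zpow.2 (.inl hq0)).restrictScalars 𝕜).fun_comp' x hq
  have deriv_qn : deriv (fun t => q t ^ n) x = n * logDeriv q x * q x ^ n := by
    rw [← logDeriv_fun_zpow hq, logDeriv_apply, div_mul_cancel₀ _ (zpow_ne_zero n hq0)]
  rw [deriv_fun_mul hqn hφ, deriv_qn]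
  ring

theorem deriv_zpow_mul_sub_connection (hq : DifferentiableAt 𝕜 q x) (hq0 : q x ≠ 0)
    (hφ : DifferentiableAt 𝕜 φ x) (n : ℤ) (r : 𝕜') :
    deriv (fun t => q t ^ n * φ t) x - n * (logDeriv q x + r) * (q x ^ n * φ x)
      = q x ^ n * (deriv φ x - n * r * φ x) := by
  rw [deriv_zpow_mul hq hq0 hφ]
  ring

end LogDeriv

/-- The connection `(c₃′ + 3 (c₁ c₃ - c₂²)) / c₃` of an Abel equation, as a function of the values
of its coefficients at a point. The value `dc₃` of the derivative of `c₃` is a separate argument so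
that both `r` (derivation `d/dx`) and `R̃` (derivation `D = μ⁻¹ d/dx`) are instances. -/
def abelConnection {K : Type*} [Field K] (dc₃ c₁ c₂ c₃ : K) : K :=
  (dc₃ + 3 * (c₁ * c₃ - c₂ ^ 2)) / c₃

theorem abelConnection_eq_div_add {K : Type*} [Field K] (dc₃ c₁ c₂ : K) {c₃ : K} (hc₃ : c₃ ≠ 0) :
    abelConnection dc₃ c₁ c₂ c₃ = dc₃ / c₃ + 3 * (c₁ - c₂ ^ 2 / c₃) := by
  unfold abelConnection
  field_simp

section Transformation

variable {c3 u m : ℝ → ℝ} {x : ℝ}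

theorem gam3_ne_zero (hc0 : c3 x ≠ 0) (hu0 : u x ≠ 0) (hm0 : m x ≠ 0) : gam3 c3 u m x ≠ 0 :=
  div_ne_zero (mul_ne_zero (pow_ne_zero 2 hu0) hc0) hm0

theorem gam1_sub_gam2_sq_div_gam3 (c1 c2 v : ℝ → ℝ)
    (hc0 : c3 x ≠ 0) (hu0 : u x ≠ 0) (hm0 : m x ≠ 0) :
    gam1 c1 c2 c3 u v m x - gam2 c2 c3 u v m x ^ 2 / gam3 c3 u m x
      = (m x)⁻¹ * (c1 x - c2 x ^ 2 / c3 x - logDeriv u x / 3) := by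
  rw [logDeriv_apply]
  unfold gam1 gam2 gam3
  field_simp
  ring

theorem logDeriv_gam3 (hc : DifferentiableAt ℝ c3 x) (hc0 : c3 x ≠ 0)
    (hu : DifferentiableAt ℝ u x) (hu0 : u x ≠ 0) (hm : DifferentiableAt ℝ m x) (hm0 : m x ≠ 0) :
    logDeriv (gam3 c3 u m) x = 2 * logDeriv u x + logDeriv c3 x - logDeriv m x := by
  have hu2 : u x ^ 2 ≠ 0 := pow_ne_zero 2 hu0
  unfold gam3
  rw [logDeriv_div (f := fun t => u t ^ 2 * c3 t) x (mul_ne_zero hu2 hc0) hm0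
      ((hu.fun_pow 2).fun_mul hc) hm,
    logDeriv_mul (f := fun t => u t ^ 2) x hu2 hc0 (hu.fun_pow 2) hc, logDeriv_fun_pow hu,
    Nat.cast_ofNat]

theorem Rtil_eq_logDeriv_add_abelConnection (c1 c2 v : ℝ → ℝ)
    (hc : DifferentiableAt ℝ c3 x) (hc0 : c3 x ≠ 0)
    (hu : DifferentiableAt ℝ u x) (hu0 : u x ≠ 0) (hm : DifferentiableAt ℝ m x) (hm0 : m x ≠ 0) :
    Rtil c1 c2 c3 u v m x
      = (m x)⁻¹ * (logDeriv (fun t => u t / m t) x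
          + abelConnection (deriv c3 x) (c1 x) (c2 x) (c3 x)) := by
  calc Rtil c1 c2 c3 u v m x
    _ = abelConnection ((m x)⁻¹ * deriv (gam3 c3 u m) x)
          (gam1 c1 c2 c3 u v m x) (gam2 c2 c3 u v m x) (gam3 c3 u m x) := rfl
    _ = (m x)⁻¹ * logDeriv (gam3 c3 u m) x
          + 3 * (gam1 c1 c2 c3 u v m x - gam2 c2 c3 u v m x ^ 2 / gam3 c3 u m x) := by
      rw [abelConnection_eq_div_add _ _ _ (gam3_ne_zero hc0 hu0 hm0), mul_div_assoc,
        logDeriv_apply]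
    _ = (m x)⁻¹ * (logDeriv u x - logDeriv m x
          + (logDeriv c3 x + 3 * (c1 x - c2 x ^ 2 / c3 x))) := by
      rw [logDeriv_gam3 hc hc0 hu hu0 hm hm0, gam1_sub_gam2_sq_div_gam3 c1 c2 v hc0 hu0 hm0]
      ring
    _ = _ := by
      rw [logDeriv_div x hu0 hm0 hu hm, abelConnection_eq_div_add _ _ _ hc0, logDeriv_apply c3]

theorem covariant_derivative_general (c1 c2 v : ℝ → ℝ)
    (hc : DifferentiableAt ℝ c3 x) (hc0 : c3 x ≠ 0)
    (hu : DifferentiableAt ℝ u x) (hu0 : u x ≠ 0) (hm : DifferentiableAt ℝ m x) (hm0 : m x ≠ 0)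
    (n : ℤ) {φ : ℝ → ℝ} (hφ : DifferentiableAt ℝ φ x) :
    (m x)⁻¹ * deriv (fun t => (u t / m t) ^ n * φ t) x
        - n * Rtil c1 c2 c3 u v m x * ((u x / m x) ^ n * φ x)
      = (1 / m x) * (u x / m x) ^ n *
          (deriv φ x - n * abelConnection (deriv c3 x) (c1 x) (c2 x) (c3 x) * φ x) := by
  have gauge := deriv_zpow_mul_sub_connection (hu.fun_div hm hm0) (div_ne_zero hu0 hm0) hφ n
    (abelConnection (deriv c3 x) (c1 x) (c2 x) (c3 x))
  rw [Rtil_eq_logDeriv_add_abelConnection c1 c2 v hc hc0 hu hu0 hm hm0, one_div, mul_assoc (m x)⁻¹,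
    ← gauge]
  ring

end Transformation

/-- `∇ₙ = d/dx − n(c₃′ + 3(c₁c₃ − c₂²))/c₃` is a covariant derivative:
for any tensor `φ` of degree `n` (i.e. transforming as `φ̃ = (u/μ)ⁿφ`),
`Dφ̃ − nR̃φ̃ = μ⁻¹(u/μ)ⁿ(φ′ − nrφ)`, so `∇ₙφ` is a tensor of degree `n + 1`. -/
theorem covariant_derivative
    (a b : ℝ) (c1 c2 c3 u v m : ℝ → ℝ)
    (hc1 : AnalyticOnNhd ℝ c1 (Ioo a b)) (hc2 : AnalyticOnNhd ℝ c2 (Ioo a b))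
    (hc3 : AnalyticOnNhd ℝ c3 (Ioo a b)) (hc30 : ∀ x ∈ Ioo a b, c3 x ≠ 0)
    (hu : AnalyticOnNhd ℝ u (Ioo a b)) (hv : AnalyticOnNhd ℝ v (Ioo a b))
    (hm : AnalyticOnNhd ℝ m (Ioo a b))
    (hu0 : ∀ x ∈ Ioo a b, u x ≠ 0) (hm0 : ∀ x ∈ Ioo a b, m x ≠ 0) :
    ∀ n : ℤ, ∀ φ : ℝ → ℝ, (∀ x ∈ Ioo a b, DifferentiableAt ℝ φ x) →
      ∀ x ∈ Ioo a b,
        (m x)⁻¹ * deriv (fun t => (u t / m t) ^ n * φ t) x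
            - (n : ℝ) * Rtil c1 c2 c3 u v m x * ((u x / m x) ^ n * φ x)
          = (1 / m x) * (u x / m x) ^ n *
              (deriv φ x
                - (n : ℝ) * ((deriv c3 x + 3 * (c1 x * c3 x - (c2 x) ^ 2)) / c3 x) * φ x) := by
  intro n φ hφ x hx
  exact covariant_derivative_general c1 c2 v (hc3 x hx).differentiableAt (hc30 x hx)
    (hu x hx).differentiableAt (hu0 x hx) (hm x hx).differentiableAt (hm0 x hx) n (hφ x hx)
end
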